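/- arXiv:2103.15387 — 2 statements merged into one kernel-verified Lean document; each statement's English description precedes it below -/
import Mathlib

section
/- Let n ≥ 1 and d ≥ 1. Then the Frobenius distance of the diagonal matrix diag(d, 1, …, 1) to SO(n) equals d − 1, i.e. dist(diag(d, 1, …, 1), SO(n)) = d − 1, and the minimum is attained at Q = Id. -/
open Matrix

/-- The Frobenius norm of a real square matrix, `|F|² = tr(Fᵀ F)`. -/
noncomputable def frob {n : ℕ} (F : Matrix (Fin n) (Fin n) ℝ) : ℝ :=
  Real.sqrt ((Fᵀ * F).trace)

/-- The special orthogonal group `SO(n)` as a set of matrices. -/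
def SOn (n : ℕ) : Set (Matrix (Fin n) (Fin n) ℝ) :=
  {Q | Qᵀ * Q = 1 ∧ Q.det = 1}

/-- The Frobenius distance of a matrix to `SO(n)`. -/
noncomputable def distSO {n : ℕ} (F : Matrix (Fin n) (Fin n) ℝ) : ℝ :=
  sInf ((fun Q => frob (F - Q)) '' SOn n)

theorem frob_trace_eq {n : ℕ} (F : Matrix (Fin n) (Fin n) ℝ) :
    (Fᵀ * F).trace = ∑ i, ∑ j, F j i ^ 2 := by
  simp [Matrix.trace, Matrix.mul_apply, sq]

theorem abs_entry_le_frob {n : ℕ} (F : Matrix (Fin n) (Fin n) ℝ) (k : Fin n) :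
    |F k k| ≤ frob F := by
  unfold frob
  apply Real.abs_le_sqrt
  rw [frob_trace_eq]
  calc F k k ^ 2 ≤ ∑ j, F j k ^ 2 :=
        Finset.single_le_sum (f := fun j => F j k ^ 2) (fun j _ => sq_nonneg _)
          (Finset.mem_univ k)
    _ ≤ _ := Finset.single_le_sum (f := fun i => ∑ j, F j i ^ 2)
          (fun i _ => Finset.sum_nonneg fun j _ => sq_nonneg _) (Finset.mem_univ k)

theorem entry_le_one {n : ℕ} (Q : Matrix (Fin n) (Fin n) ℝ) (hQ : Qᵀ * Q = 1) (k : Fin n) :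
    Q k k ≤ 1 := by
  have h : ∑ j, Q j k ^ 2 = 1 := by
    have := congrFun (congrFun hQ k) k
    simpa [Matrix.mul_apply, sq] using this
  have h2 : Q k k ^ 2 ≤ ∑ j, Q j k ^ 2 :=
    Finset.single_le_sum (f := fun j => Q j k ^ 2) (fun j _ => sq_nonneg _) (Finset.mem_univ k)
  nlinarith

theorem dist_SOn_diagonal {n : ℕ} (hn : 1 ≤ n) (d : ℝ) (hd : 1 ≤ d) :
    distSO (Matrix.diagonal (fun i : Fin n => if (i : ℕ) = 0 then d else 1)) = d - 1 ∧
    frob (Matrix.diagonal (fun i : Fin n => if (i : ℕ) = 0 then d else 1) - 1) =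
      distSO (Matrix.diagonal (fun i : Fin n => if (i : ℕ) = 0 then d else 1)) := by
  have hId : frob (Matrix.diagonal (fun i : Fin n => if (i : ℕ) = 0 then d else 1) - 1)
      = d - 1 := by
    unfold frob
    have : ((Matrix.diagonal (fun i : Fin n => if (i : ℕ) = 0 then d else 1) - 1 :
        Matrix (Fin n) (Fin n) ℝ)) =
        Matrix.diagonal (fun i : Fin n => if i = ⟨0, hn⟩ then d - 1 else 0) := by
      rw [← Matrix.diagonal_one, Matrix.diagonal_sub]
      congr 1
      funext i
      by_cases h : (i : ℕ) = 0 <;> simp [h, Fin.ext_iff]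
    rw [this, Matrix.diagonal_transpose, Matrix.diagonal_mul_diagonal, Matrix.trace_diagonal]
    have h2 : ∑ i : Fin n, ((if i = ⟨0, hn⟩ then d - 1 else 0) *
        (if i = ⟨0, hn⟩ then d - 1 else 0)) = (d - 1) ^ 2 := by
      simp [sq]
    rw [h2, Real.sqrt_sq (by linarith)]
  have hD : distSO (Matrix.diagonal (fun i : Fin n => if (i : ℕ) = 0 then d else 1)) = d - 1 := by
    unfold distSO
    apply IsLeast.csInf_eq
    refine ⟨⟨1, ⟨by simp, by simp⟩, hId⟩, ?_⟩
    rintro _ ⟨Q, ⟨hQ, -⟩, rfl⟩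
    have h1 := abs_entry_le_frob
      (Matrix.diagonal (fun i : Fin n => if (i : ℕ) = 0 then d else 1) - Q) ⟨0, hn⟩
    have h2 := entry_le_one Q hQ ⟨0, hn⟩
    have h3 := le_trans (le_abs_self _) h1
    rw [Matrix.sub_apply, Matrix.diagonal_apply_eq] at h3
    simp only [if_true] at h3
    show d - 1 ≤ frob _
    linarith
  exact ⟨hD, hId.trans hD.symm⟩
end

section
/- For every n ≥ 1 there exist constants c > 0 and C > 0 such that for every real n×n matrix F with |F| ≤ c one has |dist(Id + F, SO(n)) − |sym F|| ≤ C·|F|². -/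
open Matrix

/-- The symmetric part of a square matrix. -/
noncomputable def symPart {n : ℕ} (F : Matrix (Fin n) (Fin n) ℝ) : Matrix (Fin n) (Fin n) ℝ :=
  (2⁻¹ : ℝ) • (F + Fᵀ)

section helpers
open scoped Matrix.Norms.Frobenius

theorem frob_eq_norm {n : ℕ} (F : Matrix (Fin n) (Fin n) ℝ) : frob F = ‖F‖ := by
  rw [frob, Matrix.frobenius_norm_def, Real.sqrt_eq_rpow, Matrix.trace]
  congr 1
  simp only [Matrix.diag_apply, Matrix.mul_apply, Matrix.transpose_apply]
  rw [Finset.sum_comm]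
  refine Finset.sum_congr rfl fun i _ => Finset.sum_congr rfl fun j _ => ?_
  rw [Real.rpow_two, Real.norm_eq_abs, sq_abs, sq]

theorem norm_half_add {n : ℕ} (F G : Matrix (Fin n) (Fin n) ℝ) (h : ‖G‖ = ‖F‖) :
    ‖(2⁻¹ : ℝ) • (F + G)‖ ≤ ‖F‖ := by
  rw [norm_smul, Real.norm_eq_abs, abs_of_pos (by norm_num)]
  have := norm_add_le F G
  linarith

theorem lower_aux {n : ℕ} (F Q : Matrix (Fin n) (Fin n) ℝ) (hQ : Qᵀ * Q = 1) :
    ‖symPart F‖ - 2 * ‖F‖ ^ 2 ≤ ‖1 + F - Q‖ := by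
  have hs : ‖symPart F‖ ≤ ‖F‖ := norm_half_add _ _ (Matrix.frobenius_norm_transpose F)
  by_cases h : ‖F‖ ≤ ‖1 + F - Q‖
  · nlinarith [sq_nonneg ‖F‖]
  push Not at h
  set D := Q - 1 with hD
  have e : 1 + F - Q = F - D := by rw [hD]; abel
  rw [e] at h ⊢
  have hD2 : ‖D‖ ≤ 2 * ‖F‖ := by
    have := norm_sub_le F (F - D)
    rw [sub_sub_cancel] at this
    linarith
  have hid : D + Dᵀ = -(Dᵀ * D) := by
    rw [hD, Matrix.transpose_sub, Matrix.transpose_one, sub_mul, mul_sub, hQ]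
    simp only [mul_one, one_mul]
    abel
  have h1 : symPart F = symPart (F - D) + (2⁻¹ : ℝ) • (-(Dᵀ * D)) := by
    rw [← hid, symPart, symPart, ← smul_add, Matrix.transpose_sub]
    congr 1
    abel
  have h2 : ‖symPart (F - D)‖ ≤ ‖F - D‖ :=
    norm_half_add _ _ (Matrix.frobenius_norm_transpose _)
  have h3 : ‖(2⁻¹ : ℝ) • (-(Dᵀ * D))‖ ≤ 2⁻¹ * ‖D‖ ^ 2 := by
    rw [norm_smul, norm_neg, Real.norm_eq_abs, abs_of_pos (by norm_num)]
    have := Matrix.frobenius_norm_mul Dᵀ D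
    rw [Matrix.frobenius_norm_transpose] at this
    nlinarith
  have h4 := norm_add_le (symPart (F - D)) ((2⁻¹ : ℝ) • (-(Dᵀ * D)))
  rw [← h1] at h4
  nlinarith [norm_nonneg D]

theorem upper_aux {n : ℕ} (F : Matrix (Fin n) (Fin n) ℝ) (hF : ‖F‖ ≤ 1) :
    ∃ Q ∈ SOn n, ‖1 + F - Q‖ ≤ ‖symPart F‖ + 2 * ‖F‖ ^ 2 := by
  set A : Matrix (Fin n) (Fin n) ℝ := (2⁻¹ : ℝ) • (F + -Fᵀ) with hA
  have hAn : ‖A‖ ≤ ‖F‖ :=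
    norm_half_add _ _ (by rw [norm_neg, Matrix.frobenius_norm_transpose])
  have hAt : Aᵀ = -A := by
    rw [hA, Matrix.transpose_smul, ← smul_neg, Matrix.transpose_add, Matrix.transpose_neg,
      Matrix.transpose_transpose]
    congr 1
    abel
  have hFA : F - A = symPart F := by
    rw [hA, symPart]
    module
  set B : Matrix (Fin n) (Fin n) ℝ := (2⁻¹ : ℝ) • A with hB
  have hBA : A = B + B := by rw [hB]; module
  have hBn : ‖B‖ = 2⁻¹ * ‖A‖ := by
    rw [hB, norm_smul, Real.norm_eq_abs, abs_of_pos (by norm_num)]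
  have hBt : Bᵀ = -B := by rw [hB, Matrix.transpose_smul, hAt, smul_neg]
  have hu : IsUnit (1 - B) := isUnit_one_sub_of_norm_lt_one (by linarith)
  have hd : IsUnit (1 - B).det := (Matrix.isUnit_iff_isUnit_det _).1 hu
  have hT : (1 - B)ᵀ = 1 + B := by
    rw [Matrix.transpose_sub, Matrix.transpose_one, hBt, sub_neg_eq_add]
  have hT' : (1 + B)ᵀ = 1 - B := by rw [← hT, Matrix.transpose_transpose]
  have hd' : (1 + B).det = (1 - B).det := by rw [← hT, Matrix.det_transpose]
  have hdu : IsUnit (1 + B).det := by rw [hd']; exact hd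
  have hcomm : (1 - B) * (1 + B) = (1 + B) * (1 - B) := by noncomm_ring
  refine ⟨(1 - B)⁻¹ * (1 + B), ⟨?_, ?_⟩, ?_⟩
  · rw [Matrix.transpose_mul, Matrix.transpose_nonsing_inv, hT, hT']
    calc (1 - B) * (1 + B)⁻¹ * ((1 - B)⁻¹ * (1 + B))
        = (1 - B) * ((1 + B)⁻¹ * (1 - B)⁻¹) * (1 + B) := by simp only [mul_assoc]
      _ = (1 - B) * ((1 - B)⁻¹ * (1 + B)⁻¹) * (1 + B) := by
          rw [← Matrix.mul_inv_rev, ← Matrix.mul_inv_rev, hcomm]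
      _ = ((1 - B) * (1 - B)⁻¹) * ((1 + B)⁻¹ * (1 + B)) := by simp only [mul_assoc]
      _ = 1 := by rw [Matrix.mul_nonsing_inv _ hd, Matrix.nonsing_inv_mul _ hdu, one_mul]
  · rw [Matrix.det_mul, hd', ← Matrix.det_mul, Matrix.nonsing_inv_mul _ hd, Matrix.det_one]
  · set Q := (1 - B)⁻¹ * (1 + B) with hQ
    have hQ1 : (1 - B) * Q = 1 + B := by
      rw [hQ, ← mul_assoc, Matrix.mul_nonsing_inv _ hd, one_mul]
    set X := Q - 1 - A with hX
    have hX1 : X = B * A + B * X := by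
      have h : (1 - B) * X = B * A := by
        rw [hX, mul_sub, mul_sub, hQ1, hBA]
        noncomm_ring
      rw [← h]
      noncomm_ring
    have hXn : ‖X‖ ≤ ‖B‖ * ‖A‖ + ‖B‖ * ‖X‖ := by
      calc ‖X‖ = ‖B * A + B * X‖ := by rw [← hX1]
        _ ≤ ‖B * A‖ + ‖B * X‖ := norm_add_le _ _
        _ ≤ _ := add_le_add (Matrix.frobenius_norm_mul _ _) (Matrix.frobenius_norm_mul _ _)
    have hXb : ‖X‖ ≤ ‖A‖ ^ 2 := by
      rw [hBn] at hXn
      nlinarith [norm_nonneg X, norm_nonneg A]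
    have e : 1 + F - Q = symPart F - X := by rw [← hFA, hX]; abel
    rw [e]
    have := norm_sub_le (symPart F) X
    nlinarith [norm_nonneg A]

end helpers

theorem dist_SOn_taylor_expansion {n : ℕ} (hn : 1 ≤ n) :
    ∃ c > (0 : ℝ), ∃ C > (0 : ℝ), ∀ F : Matrix (Fin n) (Fin n) ℝ,
      frob F ≤ c → |distSO (1 + F) - frob (symPart F)| ≤ C * frob F ^ 2 := by
  refine ⟨1, one_pos, 2, two_pos, fun F hF => ?_⟩
  have hl : ∀ Q ∈ SOn n, frob (symPart F) - 2 * frob F ^ 2 ≤ frob (1 + F - Q) := by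
    intro Q hQ
    simp only [frob_eq_norm]
    exact lower_aux F Q hQ.1
  obtain ⟨Q, hQ, hQb⟩ : ∃ Q ∈ SOn n, frob (1 + F - Q) ≤ frob (symPart F) + 2 * frob F ^ 2 := by
    simp only [frob_eq_norm] at hF ⊢
    exact upper_aux F hF
  have h1 : frob (symPart F) - 2 * frob F ^ 2 ≤ distSO (1 + F) := by
    refine le_csInf ⟨_, Q, hQ, rfl⟩ ?_
    rintro _ ⟨R, hR, rfl⟩
    exact hl R hR
  have h2 : distSO (1 + F) ≤ frob (1 + F - Q) := by
    refine csInf_le ⟨frob (symPart F) - 2 * frob F ^ 2, ?_⟩ ⟨Q, hQ, rfl⟩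
    rintro _ ⟨R, hR, rfl⟩
    exact hl R hR
  rw [abs_le]
  constructor <;> linarith
end
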